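/- Assume neither p nor q is a root of unity and that K has characteristic zero. Then every locally nilpotent K-linear derivation of A_p(λ, μ, K_q[s,t]) is zero. -/

import Mathlib

/-!
Write `A` for the algebra. Leading terms reduce the theorem to a statement about homogeneous
derivations of the quantum affine space on `y, x, s, t`.

*Monomial basis.* The monomials `y ^ i x ^ j s ^ k t ^ l` form a basis of `A`: they span, because
their span is stable under left multiplication by the generators (`span_mono`), and they are
independent, because `A` acts on functions on `ℤ⁴` by the formulas of the left regular
representation (`rep`), the monomial of exponent `m` sending the delta function at `0` to the
delta function at `m` (`coef_mono`). With `ℤ⁴` ordered lexicographically, the product of elements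
with leading exponents `m` and `n` has leading exponent `m + n`, and leading coefficients multiply up
to a nonzero bicharacter `chi m n` (`coef_mul_lead`).

*Leading part.* Let `δ ≠ 0` be a locally nilpotent derivation and let `e ∈ ℤ⁴` be the largest shift
of exponents that `δ` produces on the generators (`exists_lead`). Then `δ` sends an element of
leading exponent `m` and leading coefficient `r` to an element of exponent at most `m + e`, whose
coefficient at `m + e` is `phi m * r` (`lead_delta`), where
`phi (m + n) = phi m * chi e n + phi n * chi m e` (`phi_add`) and `phi` is nonzero on some generator.

*Contradiction.* If `e` has nonnegative coordinates, the additivity rule gives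
`phi (e + k e) = (k + 1) * chi e e ^ k * phi e`, and, when `phi e = 0`,
`phi (m + k e) = chi e e ^ k * phi m`. In characteristic zero one of these never vanishes, so the
powers of `δ` never kill the corresponding monomial (`phi_eq_zero_of_nonneg`). If `e` has a negative
coordinate, it is `-1` at exactly one generator `g`, and `phi` vanishes on the other generators.
Comparing `phi (g + h)` with `phi (h + g)` shows `chi e h = chi h e` for each of these, and the
resulting multiplicative relations between `p, q, lam, mu` force a positive power of `p` or `q` to
be `1` (`chi_absurd`).
-/

noncomputable section

open FreeAlgebra

/-- Relations of the extended quantized Weyl algebra `A_p(lam, mu, K_q[s,t])`. -/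
inductive ExtWeylRel (K : Type*) [Field K] (p q lam mu : K) :
    FreeAlgebra K (Fin 4) → FreeAlgebra K (Fin 4) → Prop
  | weyl : ExtWeylRel K p q lam mu (ι K (0 : Fin 4) * ι K 1 - p • (ι K 1 * ι K 0)) 1
  | st : ExtWeylRel K p q lam mu (ι K (2 : Fin 4) * ι K 3) (q • (ι K 3 * ι K 2))
  | sx : ExtWeylRel K p q lam mu (ι K (2 : Fin 4) * ι K 0) (lam • (ι K 0 * ι K 2))
  | sy : ExtWeylRel K p q lam mu (ι K (2 : Fin 4) * ι K 1) (lam⁻¹ • (ι K 1 * ι K 2))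
  | tx : ExtWeylRel K p q lam mu (ι K (3 : Fin 4) * ι K 0) (mu • (ι K 0 * ι K 3))
  | ty : ExtWeylRel K p q lam mu (ι K (3 : Fin 4) * ι K 1) (mu⁻¹ • (ι K 1 * ι K 3))

/-- The extended quantized Weyl algebra `A_p(lam, mu, K_q[s,t])`. -/
abbrev ExtWeyl (K : Type*) [Field K] (p q lam mu : K) : Type _ :=
  RingQuot (ExtWeylRel K p q lam mu)


namespace ExtWeylAux

/-! ### Exponents, generators and relations -/

/-- Exponent vectors `(i, j, k, l)`, standing for the monomial `y ^ i x ^ j s ^ k t ^ l`. -/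
abbrev Expo : Type := ℤ × ℤ × ℤ × ℤ

/-- Exponent of the generator `y`. -/
def gy : Expo := (1, 0, 0, 0)

/-- Exponent of the generator `x`. -/
def gx : Expo := (0, 1, 0, 0)

/-- Exponent of the generator `s`. -/
def gs : Expo := (0, 0, 1, 0)

/-- Exponent of the generator `t`. -/
def gt : Expo := (0, 0, 0, 1)

/-- The identity of `ℤ⁴`, with values in `ℤ⁴` ordered lexicographically. -/
def wt : Expo →+ ℤ ×ₗ ℤ ×ₗ ℤ ×ₗ ℤ where
  toFun m := toLex (m.1, toLex (m.2.1, toLex (m.2.2.1, m.2.2.2)))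
  map_zero' := rfl
  map_add' _ _ := rfl

lemma wt_inj {m n : Expo} (h : wt m = wt n) : m = n := by
  simpa [wt, Prod.ext_iff] using h

lemma wt_gx_gy : 0 < wt gx + wt gy := by
  rw [← map_add]
  refine Prod.Lex.lt_iff.2 (Or.inl ?_)
  simp [wt, gx, gy]

variable {K : Type*} [Field K] (p q lam mu : K)

/-- The generator `x`. -/
def genX : ExtWeyl K p q lam mu := RingQuot.mkAlgHom K (ExtWeylRel K p q lam mu) (ι K 0)

/-- The generator `y`. -/
def genY : ExtWeyl K p q lam mu := RingQuot.mkAlgHom K (ExtWeylRel K p q lam mu) (ι K 1)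

/-- The generator `s`. -/
def genS : ExtWeyl K p q lam mu := RingQuot.mkAlgHom K (ExtWeylRel K p q lam mu) (ι K 2)

/-- The generator `t`. -/
def genT : ExtWeyl K p q lam mu := RingQuot.mkAlgHom K (ExtWeylRel K p q lam mu) (ι K 3)

lemma rel_xy : genX p q lam mu * genY p q lam mu
    = p • (genY p q lam mu * genX p q lam mu) + 1 := by
  have h := RingQuot.mkAlgHom_rel K (ExtWeylRel.weyl (K := K) (p := p) (q := q) (lam := lam) (mu := mu))
  simp only [map_sub, map_mul, map_smul, map_one] at h
  rw [genX, genY, ← h]; abel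

lemma rel_st : genS p q lam mu * genT p q lam mu
    = q • (genT p q lam mu * genS p q lam mu) := by
  have h := RingQuot.mkAlgHom_rel K (ExtWeylRel.st (K := K) (p := p) (q := q) (lam := lam) (mu := mu))
  simp only [map_mul, map_smul] at h
  exact h

lemma rel_sx : genS p q lam mu * genX p q lam mu
    = lam • (genX p q lam mu * genS p q lam mu) := by
  have h := RingQuot.mkAlgHom_rel K (ExtWeylRel.sx (K := K) (p := p) (q := q) (lam := lam) (mu := mu))
  simp only [map_mul, map_smul] at h
  exact h

lemma rel_sy : genS p q lam mu * genY p q lam mu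
    = lam⁻¹ • (genY p q lam mu * genS p q lam mu) := by
  have h := RingQuot.mkAlgHom_rel K (ExtWeylRel.sy (K := K) (p := p) (q := q) (lam := lam) (mu := mu))
  simp only [map_mul, map_smul] at h
  exact h

lemma rel_tx : genT p q lam mu * genX p q lam mu
    = mu • (genX p q lam mu * genT p q lam mu) := by
  have h := RingQuot.mkAlgHom_rel K (ExtWeylRel.tx (K := K) (p := p) (q := q) (lam := lam) (mu := mu))
  simp only [map_mul, map_smul] at h
  exact h

lemma rel_ty : genT p q lam mu * genY p q lam mu
    = mu⁻¹ • (genY p q lam mu * genT p q lam mu) := by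
  have h := RingQuot.mkAlgHom_rel K (ExtWeylRel.ty (K := K) (p := p) (q := q) (lam := lam) (mu := mu))
  simp only [map_mul, map_smul] at h
  exact h

/-! ### The left regular representation and the monomial basis -/

/-- Left multiplication by `y`, on coefficient functions in the basis `y ^ i x ^ j s ^ k t ^ l`, with
exponents allowed to be negative. -/
def opY : Module.End K (Expo → K) where
  toFun f m := f (m - gy)
  map_add' _ _ := rfl
  map_smul' _ _ := rfl

/-- Left multiplication by `x` on coefficient functions, from
`x y ^ i = p ^ i y ^ i x + [i] y ^ (i - 1)` with `[i] = (p ^ i - 1) / (p - 1)`. -/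
def opX : Module.End K (Expo → K) where
  toFun f m := p ^ m.1 * f (m - gx) + (p ^ (m.1 + 1) - 1) / (p - 1) * f (m + gy)
  map_add' _ _ := by funext m; simp only [Pi.add_apply]; ring
  map_smul' _ _ := by funext m; simp only [Pi.smul_apply, smul_eq_mul, RingHom.id_apply]; ring

/-- Left multiplication by `s` on coefficient functions. -/
def opS : Module.End K (Expo → K) where
  toFun f m := lam ^ (m.2.1 - m.1) * f (m - gs)
  map_add' _ _ := by funext m; simp only [Pi.add_apply]; ring
  map_smul' _ _ := by funext m; simp only [Pi.smul_apply, smul_eq_mul, RingHom.id_apply]; ring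

/-- Left multiplication by `t` on coefficient functions. -/
def opT : Module.End K (Expo → K) where
  toFun f m := mu ^ (m.2.1 - m.1) * q ^ (- m.2.2.1) * f (m - gt)
  map_add' _ _ := by funext m; simp only [Pi.add_apply]; ring
  map_smul' _ _ := by funext m; simp only [Pi.smul_apply, smul_eq_mul, RingHom.id_apply]; ring

variable {p q lam mu}

/-- The conditions on the parameters under which the monomials `y ^ i x ^ j s ^ k t ^ l` multiply
as in a quantum affine space up to lower terms; `p ≠ 1` makes the quantum integers
`(p ^ n - 1) / (p - 1)` meaningful. -/
structure Params (p q lam mu : K) : Prop where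
  hp : p ≠ 0
  hp1 : p ≠ 1
  hq : q ≠ 0
  hlam : lam ≠ 0
  hmu : mu ≠ 0

/-- The action of the algebra on functions on `ℤ⁴` through the operators above. -/
def rep (H : Params p q lam mu) :
    ExtWeyl K p q lam mu →ₐ[K] Module.End K (Expo → K) :=
  RingQuot.liftAlgHom K ⟨FreeAlgebra.lift K ![opX p, opY, opS lam, opT q mu], by
    obtain ⟨hp, hp1, hq, hlam, hmu⟩ := H
    have hp1' : p - 1 ≠ 0 := sub_ne_zero.2 hp1
    intro a b h
    induction h <;>
    · simp only [map_sub, map_mul, map_smul, map_one, FreeAlgebra.lift_ι_apply]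
      refine LinearMap.ext fun f => funext fun m => ?_
      obtain ⟨i, j, k, l⟩ := m
      simp [opX, opY, opS, opT, gx, gy, gs, gt, zpow_add₀, zpow_sub₀, hp, hq, hlam, hmu]
      try field_simp
      try ring_nf⟩

lemma rep_genX (H : Params p q lam mu) : rep H (genX p q lam mu) = opX p := by
  simp [rep, genX]
lemma rep_genY (H : Params p q lam mu) : rep H (genY p q lam mu) = opY := by
  simp [rep, genY]
lemma rep_genS (H : Params p q lam mu) : rep H (genS p q lam mu) = opS lam := by
  simp [rep, genS]
lemma rep_genT (H : Params p q lam mu) : rep H (genT p q lam mu) = opT q mu := by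
  simp [rep, genT]

/-- The coefficients of an element in the monomial basis, read off from its action on the delta
function at `0`. -/
def coef (H : Params p q lam mu) : ExtWeyl K p q lam mu →ₗ[K] (Expo → K) :=
  (LinearMap.applyₗ (Pi.single 0 1)) ∘ₗ (rep H).toLinearMap

lemma coef_mul (H : Params p q lam mu) (a b : ExtWeyl K p q lam mu) :
    coef H (a * b) = rep H a (coef H b) := by
  simp [coef]

lemma coef_one (H : Params p q lam mu) :
    coef H (1 : ExtWeyl K p q lam mu) = Pi.single 0 1 := by
  simp [coef]

lemma coef_genX_mul (H : Params p q lam mu) (b : ExtWeyl K p q lam mu) (m : Expo) :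
    coef H (genX p q lam mu * b) m = p ^ m.1 * coef H b (m - gx)
      + (p ^ (m.1 + 1) - 1) / (p - 1) * coef H b (m + gy) := by
  rw [coef_mul, rep_genX]; rfl
lemma coef_genY_mul (H : Params p q lam mu) (b : ExtWeyl K p q lam mu) (m : Expo) :
    coef H (genY p q lam mu * b) m = coef H b (m - gy) := by
  rw [coef_mul, rep_genY]; rfl
lemma coef_genS_mul (H : Params p q lam mu) (b : ExtWeyl K p q lam mu) (m : Expo) :
    coef H (genS p q lam mu * b) m = lam ^ (m.2.1 - m.1) * coef H b (m - gs) := by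
  rw [coef_mul, rep_genS]; rfl
lemma coef_genT_mul (H : Params p q lam mu) (b : ExtWeyl K p q lam mu) (m : Expo) :
    coef H (genT p q lam mu * b) m
      = mu ^ (m.2.1 - m.1) * q ^ (- m.2.2.1) * coef H b (m - gt) := by
  rw [coef_mul, rep_genT]; rfl

variable (p q lam mu) in
/-- The monomial `y ^ i x ^ j s ^ k t ^ l`. -/
def mono (i j k l : ℕ) : ExtWeyl K p q lam mu :=
  genY p q lam mu ^ i * (genX p q lam mu ^ j * (genS p q lam mu ^ k * genT p q lam mu ^ l))

lemma coef_mono (H : Params p q lam mu) (i j k l : ℕ) :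
    coef H (mono p q lam mu i j k l) = Pi.single ((i, j, k, l) : Expo) 1 := by
  have single_congr : ∀ {m n : Expo} {m' n' : Expo}, (m = n ↔ m' = n') →
      (Pi.single n (1 : K) : Expo → K) m = (Pi.single n' (1 : K) : Expo → K) m' := by
    intro m n m' n' h
    simp only [Pi.single_apply, h]
  have hT : coef H (genT p q lam mu ^ l) = Pi.single ((0, 0, 0, l) : Expo) 1 := by
    induction l with
    | zero => rw [pow_zero]; exact coef_one H
    | succ l ih =>
      funext m
      obtain ⟨a, b, c, d⟩ := m
      rw [pow_succ', coef_genT_mul, ih]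
      simp only [Pi.single_apply, gt, Prod.mk_sub_mk, Prod.mk.injEq, Nat.cast_succ]
      split_ifs with h1 h2 h2
      · obtain ⟨h, h', h'', -⟩ := h2; simp [h, h', h'']
      · omega
      · omega
      · simp
  have hS : coef H (genS p q lam mu ^ k * genT p q lam mu ^ l)
      = Pi.single ((0, 0, k, l) : Expo) 1 := by
    induction k with
    | zero => simpa using hT
    | succ k ih =>
      funext m
      obtain ⟨a, b, c, d⟩ := m
      rw [pow_succ', mul_assoc, coef_genS_mul, ih]
      simp only [Pi.single_apply, gs, Prod.mk_sub_mk, Prod.mk.injEq, Nat.cast_succ]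
      split_ifs with h1 h2 h2
      · obtain ⟨h, h', -⟩ := h2; simp [h, h']
      · omega
      · omega
      · simp
  have hX : coef H (genX p q lam mu ^ j * (genS p q lam mu ^ k * genT p q lam mu ^ l))
      = Pi.single ((0, j, k, l) : Expo) 1 := by
    induction j with
    | zero => simpa using hS
    | succ j ih =>
      funext m
      obtain ⟨a, b, c, d⟩ := m
      rw [pow_succ', mul_assoc, coef_genX_mul, ih]
      simp only [Pi.single_apply, gx, gy, Prod.mk_sub_mk, Prod.mk_add_mk, Prod.mk.injEq,
        Nat.cast_succ]
      -- the second summand lives at `a = -1`, where the quantum integer `[a + 1]` vanishes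
      have h0 : (p ^ (a + 1) - 1) / (p - 1) *
          (if a + 1 = 0 ∧ b + 0 = (j : ℤ) ∧ c + 0 = (k : ℤ) ∧ d + 0 = (l : ℤ) then (1 : K) else 0)
          = 0 := by
        split_ifs with h
        · rw [h.1]; simp
        · simp
      rw [h0, add_zero]
      split_ifs with h1 h2 h2
      · obtain ⟨h, -⟩ := h2; simp [h]
      · omega
      · omega
      · simp
  unfold mono
  induction i with
  | zero => simpa using hX
  | succ i ih =>
    funext m
    obtain ⟨a, b, c, d⟩ := m
    rw [pow_succ', mul_assoc, coef_genY_mul, ih]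
    apply single_congr
    simp only [gy, Prod.mk_sub_mk, Prod.mk.injEq, Nat.cast_succ]
    omega

/-- The span of the monomials is stable under left multiplication by `y`, then `x`, `s` and `t`,
each step moving the new generator past the earlier ones. -/
lemma span_mono (hq : q ≠ 0) :
    Submodule.span K (Set.range fun m : ℕ × ℕ × ℕ × ℕ =>
      mono p q lam mu m.1 m.2.1 m.2.2.1 m.2.2.2) = ⊤ := by
  set W := Submodule.span K (Set.range fun m : ℕ × ℕ × ℕ × ℕ =>
      mono p q lam mu m.1 m.2.1 m.2.2.1 m.2.2.2) with hW
  have hm : ∀ i j k l, mono p q lam mu i j k l ∈ W := fun i j k l =>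
    Submodule.subset_span ⟨(i, j, k, l), rfl⟩
  have closed : ∀ g : ExtWeyl K p q lam mu, (∀ i j k l, g * mono p q lam mu i j k l ∈ W) →
      ∀ b ∈ W, g * b ∈ W := by
    intro g hg b hb
    induction hb using Submodule.span_induction with
    | mem x hx => obtain ⟨m, rfl⟩ := hx; exact hg _ _ _ _
    | zero => simp
    | add x y _ _ hx hy => rw [mul_add]; exact W.add_mem hx hy
    | smul r x _ hx => rw [mul_smul_comm]; exact W.smul_mem r hx
  have hY : ∀ b ∈ W, genY p q lam mu * b ∈ W := by
    refine closed _ fun i j k l => ?_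
    have := hm (i + 1) j k l
    rwa [mono, pow_succ', mul_assoc] at this
  have hX : ∀ b ∈ W, genX p q lam mu * b ∈ W := by
    refine closed _ fun i j k l => ?_
    induction i with
    | zero =>
      have := hm 0 (j + 1) k l
      rw [mono, pow_succ' _ j] at this
      simpa [mono, mul_assoc] using this
    | succ i ih =>
      have h : genX p q lam mu * mono p q lam mu (i + 1) j k l
          = p • (genY p q lam mu * (genX p q lam mu * mono p q lam mu i j k l))
            + mono p q lam mu i j k l := by
        rw [mono, pow_succ', mul_assoc, ← mul_assoc (genX p q lam mu) (genY p q lam mu), rel_xy,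
          add_mul, one_mul, smul_mul_assoc, mul_assoc]
        rfl
      rw [h]
      exact W.add_mem (W.smul_mem _ (hY _ ih)) (hm _ _ _ _)
  have hS : ∀ b ∈ W, genS p q lam mu * b ∈ W := by
    refine closed _ fun i j k l => ?_
    induction i with
    | zero =>
      induction j with
      | zero =>
        have := hm 0 0 (k + 1) l
        rw [mono, pow_succ' _ k] at this
        simpa [mono, mul_assoc] using this
      | succ j ih =>
        have h : genS p q lam mu * mono p q lam mu 0 (j + 1) k l
            = lam • (genX p q lam mu * (genS p q lam mu * mono p q lam mu 0 j k l)) := by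
          simp only [mono, pow_zero, one_mul]
          rw [pow_succ', mul_assoc, ← mul_assoc (genS p q lam mu) (genX p q lam mu), rel_sx,
            smul_mul_assoc, mul_assoc]
        rw [h]
        exact W.smul_mem _ (hX _ ih)
    | succ i ih =>
      have h : genS p q lam mu * mono p q lam mu (i + 1) j k l
          = lam⁻¹ • (genY p q lam mu * (genS p q lam mu * mono p q lam mu i j k l)) := by
        rw [mono, pow_succ', mul_assoc, ← mul_assoc (genS p q lam mu) (genY p q lam mu), rel_sy,
          smul_mul_assoc, mul_assoc]
        rfl
      rw [h]
      exact W.smul_mem _ (hY _ ih)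
  have hT : ∀ b ∈ W, genT p q lam mu * b ∈ W := by
    refine closed _ fun i j k l => ?_
    induction i with
    | zero =>
      induction j with
      | zero =>
        induction k with
        | zero =>
          have := hm 0 0 0 (l + 1)
          rw [mono, pow_succ' _ l] at this
          simpa [mono, mul_assoc] using this
        | succ k ih =>
          have h : genT p q lam mu * mono p q lam mu 0 0 (k + 1) l
              = q⁻¹ • (genS p q lam mu * (genT p q lam mu * mono p q lam mu 0 0 k l)) := by
            simp only [mono, pow_zero, one_mul]
            rw [← mul_assoc (genS p q lam mu) (genT p q lam mu), rel_st, smul_mul_assoc,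
              smul_smul, inv_mul_cancel₀ hq, one_smul, pow_succ']
            simp only [mul_assoc]
          rw [h]
          exact W.smul_mem _ (hS _ ih)
      | succ j ih =>
        have h : genT p q lam mu * mono p q lam mu 0 (j + 1) k l
            = mu • (genX p q lam mu * (genT p q lam mu * mono p q lam mu 0 j k l)) := by
          simp only [mono, pow_zero, one_mul]
          rw [pow_succ', mul_assoc, ← mul_assoc (genT p q lam mu) (genX p q lam mu), rel_tx,
            smul_mul_assoc, mul_assoc]
        rw [h]
        exact W.smul_mem _ (hX _ ih)
    | succ i ih =>
      have h : genT p q lam mu * mono p q lam mu (i + 1) j k l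
          = mu⁻¹ • (genY p q lam mu * (genT p q lam mu * mono p q lam mu i j k l)) := by
        rw [mono, pow_succ', mul_assoc, ← mul_assoc (genT p q lam mu) (genY p q lam mu), rel_ty,
          smul_mul_assoc, mul_assoc]
        rfl
      rw [h]
      exact W.smul_mem _ (hY _ ih)
  have key : ∀ f : FreeAlgebra K (Fin 4), ∀ b ∈ W,
      RingQuot.mkAlgHom K (ExtWeylRel K p q lam mu) f * b ∈ W := by
    intro f
    induction f using FreeAlgebra.induction with
    | grade0 r =>
      intro b hb
      rw [AlgHom.commutes, ← Algebra.smul_def]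
      exact W.smul_mem r hb
    | grade1 i =>
      fin_cases i
      · exact hX
      · exact hY
      · exact hS
      · exact hT
    | mul f g hf hg =>
      intro b hb
      rw [map_mul, mul_assoc]
      exact hf _ (hg _ hb)
    | add f g hf hg =>
      intro b hb
      rw [map_add, add_mul]
      exact W.add_mem (hf _ hb) (hg _ hb)
  refine eq_top_iff.2 fun a _ => ?_
  obtain ⟨f, rfl⟩ := RingQuot.mkAlgHom_surjective K (ExtWeylRel K p q lam mu) a
  have h1 : (1 : ExtWeyl K p q lam mu) ∈ W := by simpa [mono] using hm 0 0 0 0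
  simpa using key f 1 h1

variable (p q lam mu) in
/-- The monomial with exponent vector `m`; meaningful for `0 ≤ m` only. -/
def monoZ (m : Expo) : ExtWeyl K p q lam mu :=
  mono p q lam mu m.1.toNat m.2.1.toNat m.2.2.1.toNat m.2.2.2.toNat

lemma coef_monoZ (H : Params p q lam mu) {m : Expo} (hm : 0 ≤ m) :
    coef H (monoZ p q lam mu m) = Pi.single m 1 := by
  obtain ⟨i, j, k, l⟩ := m
  obtain ⟨hi, hj, hk, hl⟩ : 0 ≤ i ∧ 0 ≤ j ∧ 0 ≤ k ∧ 0 ≤ l := hm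
  rw [monoZ, coef_mono]
  simp [hi, hj, hk, hl]

/-- Every element is the combination of monomials prescribed by `coef`. -/
lemma expansion (H : Params p q lam mu) (a : ExtWeyl K p q lam mu) :
    ∃ S : Finset Expo, (∀ m ∈ S, 0 ≤ m) ∧ (∀ m ∉ S, coef H a m = 0) ∧
      a = ∑ m ∈ S, coef H a m • monoZ p q lam mu m := by
  classical
  have ha : a ∈ Submodule.span K (monoZ p q lam mu '' {m | 0 ≤ m}) := by
    have h : a ∈ (⊤ : Submodule K (ExtWeyl K p q lam mu)) := trivial
    rw [← span_mono H.hq] at h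
    refine Submodule.span_mono ?_ h
    rintro _ ⟨m, rfl⟩
    refine ⟨((m.1 : ℤ), (m.2.1 : ℤ), (m.2.2.1 : ℤ), (m.2.2.2 : ℤ)), ?_, ?_⟩
    · simp [Prod.le_def]
    · simp [monoZ]
  rw [Finsupp.mem_span_image_iff_linearCombination] at ha
  obtain ⟨f, hf, rfl⟩ := ha
  have hS : ∀ m ∈ f.support, 0 ≤ m := fun m hm => hf hm
  have hc : ∀ m, coef H (Finsupp.linearCombination K (monoZ p q lam mu) f) m = f m := by
    intro m
    rw [Finsupp.linearCombination_apply, Finsupp.sum, map_sum, Finset.sum_apply]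
    rw [Finset.sum_congr rfl (g := fun n => if m = n then f n else 0)]
    · simp +contextual
    · intro n hn
      rw [map_smul, coef_monoZ H (hS n hn)]
      simp [Pi.single_apply]
  refine ⟨f.support, hS, fun m hm => ?_, ?_⟩
  · rw [hc]; simpa using hm
  · simp only [hc]
    rfl

lemma coef_eq_zero (H : Params p q lam mu) (a : ExtWeyl K p q lam mu) {m : Expo}
    (hm : ¬ 0 ≤ m) : coef H a m = 0 := by
  obtain ⟨S, hS, h0, -⟩ := expansion H a
  exact h0 m fun h => hm (hS m h)

lemma coef_injective (H : Params p q lam mu) {a : ExtWeyl K p q lam mu}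
    (h : ∀ m, coef H a m = 0) : a = 0 := by
  obtain ⟨S, -, -, hS⟩ := expansion H a
  rw [hS]
  simp [h]

/-! ### Leading terms -/

variable (p q lam mu) in
/-- The bicharacter by which leading monomials multiply: the product of the monomials of exponents
`m` and `n` is `chi m n` times the one of exponent `m + n`, up to lower terms. -/
def chi (m n : Expo) : K :=
  p ^ (m.2.1 * n.1) * lam ^ (m.2.2.1 * (n.2.1 - n.1)) * mu ^ (m.2.2.2 * (n.2.1 - n.1))
    * q ^ (-(m.2.2.2 * n.2.2.1))

lemma chi_add_left (H : Params p q lam mu) (m m' n : Expo) :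
    chi p q lam mu (m + m') n = chi p q lam mu m n * chi p q lam mu m' n := by
  simp only [chi, Prod.fst_add, Prod.snd_add, add_mul, neg_add, zpow_add₀ H.hp, zpow_add₀ H.hq,
    zpow_add₀ H.hlam, zpow_add₀ H.hmu]
  ring

lemma chi_add_right (H : Params p q lam mu) (m n n' : Expo) :
    chi p q lam mu m (n + n') = chi p q lam mu m n * chi p q lam mu m n' := by
  simp only [chi, Prod.fst_add, Prod.snd_add, mul_add, neg_add, zpow_add₀ H.hp, zpow_add₀ H.hq,
    zpow_add₀ H.hlam, zpow_add₀ H.hmu, add_sub_add_comm]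
  ring

lemma chi_ne_zero (H : Params p q lam mu) (m n : Expo) : chi p q lam mu m n ≠ 0 := by
  simp [chi, zpow_ne_zero, H.hp, H.hq, H.hlam, H.hmu]

/-- `Fil H m a`: all exponents occurring in `a` are at most `m` in the lexicographic order. -/
def Fil (H : Params p q lam mu) (m : Expo) (a : ExtWeyl K p q lam mu) : Prop :=
  ∀ n, wt m < wt n → coef H a n = 0

lemma Fil.add {H : Params p q lam mu} {m : Expo} {a b : ExtWeyl K p q lam mu}
    (ha : Fil H m a) (hb : Fil H m b) : Fil H m (a + b) := by
  intro n hn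
  rw [map_add, Pi.add_apply, ha n hn, hb n hn, add_zero]

lemma Fil.smul {H : Params p q lam mu} {m : Expo} {a : ExtWeyl K p q lam mu}
    (r : K) (ha : Fil H m a) : Fil H m (r • a) := by
  intro n hn
  rw [map_smul, Pi.smul_apply, ha n hn, smul_zero]

lemma Fil.zero (H : Params p q lam mu) (m : Expo) : Fil H m 0 := by
  intro n _
  simp

lemma Fil.of_lt {H : Params p q lam mu} {m m' : Expo} {a : ExtWeyl K p q lam mu}
    (h : wt m < wt m') (ha : Fil H m a) : Fil H m' a :=
  fun n hn => ha n (h.trans hn)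

lemma Fil.monoZ (H : Params p q lam mu) {m : Expo} (hm : 0 ≤ m) :
    Fil H m (monoZ p q lam mu m) := by
  intro n hn
  rw [coef_monoZ H hm, Pi.single_eq_of_ne]
  rintro rfl
  exact hn.false

/-- `Good H a m r`: left multiplication by `a` behaves as if `a` had leading exponent at most `m`,
with coefficient `r` at `m`. By `good_of_fil` this holds for `r = coef H a m` whenever
`Fil H m a`. -/
def Good (H : Params p q lam mu) (a : ExtWeyl K p q lam mu) (m : Expo) (r : K) : Prop :=
  ∀ n b, Fil H n b →
    Fil H (m + n) (a * b) ∧ coef H (a * b) (m + n) = r * chi p q lam mu m n * coef H b n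

lemma Good.mul {H : Params p q lam mu} {a b : ExtWeyl K p q lam mu} {m n : Expo} {r r' : K}
    (ha : Good H a m r) (hb : Good H b n r') :
    Good H (a * b) (m + n) (r * r' * chi p q lam mu m n) := by
  intro l c hc
  obtain ⟨h1, h2⟩ := hb l c hc
  obtain ⟨h3, h4⟩ := ha _ _ h1
  rw [mul_assoc, add_assoc]
  refine ⟨h3, ?_⟩
  rw [h4, h2, chi_add_left H, chi_add_right H]
  ring

lemma Good.mul_one {H : Params p q lam mu} {a b : ExtWeyl K p q lam mu} {m n : Expo}
    (ha : Good H a m 1) (hb : Good H b n 1) (h : chi p q lam mu m n = 1) :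
    Good H (a * b) (m + n) 1 := by
  simpa [h] using ha.mul hb

lemma Good.one (H : Params p q lam mu) : Good H (1 : ExtWeyl K p q lam mu) 0 1 := by
  intro n b hb
  simpa [chi] using hb

lemma Good.pow {H : Params p q lam mu} {a : ExtWeyl K p q lam mu} {m : Expo}
    (ha : Good H a m 1) (h : ∀ n : ℕ, chi p q lam mu m (n • m) = 1) (n : ℕ) :
    Good H (a ^ n) (n • m) 1 := by
  induction n with
  | zero => simpa using Good.one H
  | succ n ih =>
    rw [pow_succ', succ_nsmul']
    exact ha.mul_one ih (h n)

lemma Good.add {H : Params p q lam mu} {a b : ExtWeyl K p q lam mu} {m : Expo} {r r' : K}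
    (ha : Good H a m r) (hb : Good H b m r') : Good H (a + b) m (r + r') := by
  intro n c hc
  obtain ⟨h1, h2⟩ := ha n c hc
  obtain ⟨h3, h4⟩ := hb n c hc
  rw [add_mul]
  refine ⟨h1.add h3, ?_⟩
  rw [map_add, Pi.add_apply, h2, h4]
  ring

lemma Good.smul {H : Params p q lam mu} {a : ExtWeyl K p q lam mu} {m : Expo} {r : K}
    (s : K) (ha : Good H a m r) : Good H (s • a) m (s * r) := by
  intro n c hc
  obtain ⟨h1, h2⟩ := ha n c hc
  rw [smul_mul_assoc]
  refine ⟨h1.smul s, ?_⟩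
  rw [map_smul, Pi.smul_apply, h2, smul_eq_mul]
  ring

lemma Good.zero (H : Params p q lam mu) (m : Expo) :
    Good H (0 : ExtWeyl K p q lam mu) m 0 := by
  intro n c _
  rw [zero_mul]
  exact ⟨Fil.zero H _, by simp⟩

lemma Good.of_lt {H : Params p q lam mu} {a : ExtWeyl K p q lam mu} {m m' : Expo} {r : K}
    (h : wt m < wt m') (ha : Good H a m r) : Good H a m' 0 := by
  intro n c hc
  have hlt : wt (m + n) < wt (m' + n) := by
    rw [map_add, map_add]; gcongr
  obtain ⟨h1, -⟩ := ha n c hc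
  refine ⟨h1.of_lt hlt, ?_⟩
  rw [h1 _ hlt]
  ring

lemma good_genX (H : Params p q lam mu) : Good H (genX p q lam mu) gx 1 := by
  intro n b hb
  have hpos := wt_gx_gy
  refine ⟨fun l hl => ?_, ?_⟩
  · rw [map_add] at hl
    have h1 : wt n < wt (l - gx) := by rw [map_sub]; exact lt_sub_iff_add_lt'.2 hl
    have h2 : wt (l - gx) < wt (l + gy) := by
      have : l + gy = (l - gx) + (gx + gy) := by abel
      rw [this, map_add wt (l - gx), map_add wt gx]
      exact lt_add_of_pos_right _ hpos
    rw [coef_genX_mul, hb _ h1, hb _ (h1.trans h2)]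
    ring
  · have h2 : wt n < wt (gx + n + gy) := by
      have : gx + n + gy = n + (gx + gy) := by abel
      rw [this, map_add wt n, map_add wt gx]
      exact lt_add_of_pos_right _ hpos
    rw [coef_genX_mul, hb _ h2, add_sub_cancel_left]
    simp [chi, gx]

/-- A generator whose left multiplication shifts exponents by `g`, up to scalars, is `Good`. -/
lemma good_of_shift (H : Params p q lam mu) (a : ExtWeyl K p q lam mu) (g : Expo)
    (u : Expo → K) (hu : ∀ b m, coef H (a * b) m = u m * coef H b (m - g))
    (hchi : ∀ n, u (g + n) = chi p q lam mu g n) : Good H a g 1 := by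
  intro n b hb
  refine ⟨fun l hl => ?_, ?_⟩
  · rw [map_add] at hl
    have h1 : wt n < wt (l - g) := by rw [map_sub]; exact lt_sub_iff_add_lt'.2 hl
    rw [hu, hb _ h1, mul_zero]
  · rw [hu, hchi, add_sub_cancel_left, one_mul]

lemma good_genY (H : Params p q lam mu) : Good H (genY p q lam mu) gy 1 :=
  good_of_shift H _ _ (fun _ => 1) (fun b m => by rw [coef_genY_mul, one_mul])
    fun n => by simp [chi, gy]

lemma good_genS (H : Params p q lam mu) : Good H (genS p q lam mu) gs 1 :=
  good_of_shift H _ _ _ (fun b m => coef_genS_mul H b m) fun n => by simp [chi, gs]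

lemma good_genT (H : Params p q lam mu) : Good H (genT p q lam mu) gt 1 :=
  good_of_shift H _ _ _ (fun b m => coef_genT_mul H b m) fun n => by simp [chi, gt]

lemma expo_eq {m : Expo} (hm : 0 ≤ m) :
    m.1.toNat • gy + (m.2.1.toNat • gx + (m.2.2.1.toNat • gs + m.2.2.2.toNat • gt)) = m := by
  obtain ⟨i, j, k, l⟩ := m
  obtain ⟨hi, hj, hk, hl⟩ : 0 ≤ i ∧ 0 ≤ j ∧ 0 ≤ k ∧ 0 ≤ l := hm
  simp [gx, gy, gs, gt, hi, hj, hk, hl]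

lemma good_monoZ (H : Params p q lam mu) {m : Expo} (hm : 0 ≤ m) :
    Good H (monoZ p q lam mu m) m 1 := by
  have hY := (good_genY H).pow (fun n => by simp [chi, gy]) m.1.toNat
  have hX := (good_genX H).pow (fun n => by simp [chi, gx]) m.2.1.toNat
  have hS := (good_genS H).pow (fun n => by simp [chi, gs]) m.2.2.1.toNat
  have hT := (good_genT H).pow (fun n => by simp [chi, gt]) m.2.2.2.toNat
  have h := hY.mul_one (hX.mul_one (hS.mul_one hT ?_) ?_) ?_
  · rwa [expo_eq hm] at h
  all_goals simp [chi, gx, gy, gs, gt]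

/-- Induction principle for elements of `Fil H m`: an additive relation `P` between elements and
scalars, attaching `0` to lower monomials and `R * c` to `c` times the monomial of exponent `m`,
attaches `R * coef H a m` to `a`. -/
lemma sum_lead (H : Params p q lam mu) (P : ExtWeyl K p q lam mu → K → Prop) (m : Expo)
    (h0 : P 0 0) (hadd : ∀ a b r s, P a r → P b s → P (a + b) (r + s)) (R : K)
    (hlt : ∀ (n : Expo) (c : K), 0 ≤ n → wt n < wt m → P (c • monoZ p q lam mu n) 0)
    (heq : ∀ c : K, 0 ≤ m → P (c • monoZ p q lam mu m) (R * c))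
    (a : ExtWeyl K p q lam mu) (ha : Fil H m a) : P a (R * coef H a m) := by
  classical
  obtain ⟨S, hS, h1, h2⟩ := expansion H a
  have key : ∀ T ⊆ S, P (∑ n ∈ T, coef H a n • monoZ p q lam mu n)
      (∑ n ∈ T, if n = m then R * coef H a m else 0) := by
    intro T
    induction T using Finset.induction_on with
    | empty => intro _; simpa using h0
    | insert n T hn ih =>
      intro hT
      rw [Finset.sum_insert hn, Finset.sum_insert hn]
      refine hadd _ _ _ _ ?_ (ih fun x hx => hT (Finset.mem_insert_of_mem hx))
      have hn0 : 0 ≤ n := hS n (hT (Finset.mem_insert_self _ _))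
      split_ifs with h
      · subst h; exact heq _ hn0
      · rcases lt_trichotomy (wt n) (wt m) with h' | h' | h'
        · exact hlt _ _ hn0 h'
        · exact absurd (wt_inj h') h
        · rw [ha n h', zero_smul]; exact h0
  have h3 := key S subset_rfl
  rw [← h2, Finset.sum_ite_eq'] at h3
  split_ifs at h3 with h
  · exact h3
  · rwa [h1 m h, mul_zero]

lemma good_of_fil (H : Params p q lam mu) {a : ExtWeyl K p q lam mu} {m : Expo}
    (ha : Fil H m a) : Good H a m (coef H a m) := by
  rw [← one_mul (coef H a m)]
  refine sum_lead H (fun a r => Good H a m r) m (Good.zero H m) (fun a b r s h h' => h.add h') 1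
    (fun n c hn h => ?_) (fun c hm => ?_) a ha
  · exact ((good_monoZ H hn).smul c).of_lt h
  · simpa using (good_monoZ H hm).smul c

lemma Fil.mul {H : Params p q lam mu} {a b : ExtWeyl K p q lam mu} {m n : Expo}
    (ha : Fil H m a) (hb : Fil H n b) : Fil H (m + n) (a * b) :=
  (good_of_fil H ha n b hb).1

lemma coef_mul_lead {H : Params p q lam mu} {a b : ExtWeyl K p q lam mu} {m n : Expo}
    (ha : Fil H m a) (hb : Fil H n b) :
    coef H (a * b) (m + n) = coef H a m * chi p q lam mu m n * coef H b n :=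
  (good_of_fil H ha n b hb).2

lemma Good.fil {H : Params p q lam mu} {a : ExtWeyl K p q lam mu} {m : Expo} {r : K}
    (h : Good H a m r) : Fil H m a := by
  have h1 : Fil H 0 (1 : ExtWeyl K p q lam mu) := by
    intro n hn
    rw [coef_one, Pi.single_eq_of_ne]
    rintro rfl
    exact hn.false
  simpa using (h 0 1 h1).1

/-! ### Leading part of a derivation -/

section Derivation

variable {H : Params p q lam mu} {δ : Module.End K (ExtWeyl K p q lam mu)} {e : Expo}

/-- Elements `a` of leading exponent at most `m` with `δ a` of exponent at most `m + e` are stable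
under products. -/
lemma nice_mul (hL : ∀ a b, δ (a * b) = δ a * b + a * δ b)
    {a b : ExtWeyl K p q lam mu} {m n : Expo} (ha : Fil H m a ∧ Fil H (m + e) (δ a))
    (hb : Fil H n b ∧ Fil H (n + e) (δ b)) :
    Fil H (m + n) (a * b) ∧ Fil H (m + n + e) (δ (a * b)) := by
  refine ⟨ha.1.mul hb.1, ?_⟩
  rw [hL]
  refine Fil.add ?_ ?_
  · rw [add_right_comm]; exact ha.2.mul hb.1
  · rw [add_assoc]; exact ha.1.mul hb.2

lemma nice_pow (hL : ∀ a b, δ (a * b) = δ a * b + a * δ b)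
    {a : ExtWeyl K p q lam mu} {m : Expo} (ha : Fil H m a ∧ Fil H (m + e) (δ a)) (n : ℕ) :
    Fil H (n • m) (a ^ n) ∧ Fil H (n • m + e) (δ (a ^ n)) := by
  induction n with
  | zero =>
    have h1 : δ 1 = 0 := by simpa using hL 1 1
    rw [pow_zero, zero_smul, h1]
    exact ⟨(Good.one H).fil, Fil.zero H _⟩
  | succ n ih =>
    rw [pow_succ, succ_nsmul]
    exact nice_mul hL ih ha

lemma nice_monoZ (hL : ∀ a b, δ (a * b) = δ a * b + a * δ b)
    (hX : Fil H (gx + e) (δ (genX p q lam mu))) (hY : Fil H (gy + e) (δ (genY p q lam mu)))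
    (hS : Fil H (gs + e) (δ (genS p q lam mu))) (hT : Fil H (gt + e) (δ (genT p q lam mu)))
    {m : Expo} (hm : 0 ≤ m) : Fil H (m + e) (δ (monoZ p q lam mu m)) := by
  have h := nice_mul hL (nice_pow hL ⟨(good_genY H).fil, hY⟩ m.1.toNat)
    (nice_mul hL (nice_pow hL ⟨(good_genX H).fil, hX⟩ m.2.1.toNat)
    (nice_mul hL (nice_pow hL ⟨(good_genS H).fil, hS⟩ m.2.2.1.toNat)
    (nice_pow hL ⟨(good_genT H).fil, hT⟩ m.2.2.2.toNat)))
  rw [expo_eq hm] at h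
  exact h.2

variable (H δ e) in
/-- The coefficient at `m + e` of `δ` of the monomial of exponent `m`: the action of the degree-`e`
part of `δ`. Meaningful for `0 ≤ m` only. -/
def phi (m : Expo) : K := coef H (δ (monoZ p q lam mu m)) (m + e)

lemma lead_delta (hM : ∀ m, 0 ≤ m → Fil H (m + e) (δ (monoZ p q lam mu m)))
    {a : ExtWeyl K p q lam mu} {m : Expo} (ha : Fil H m a) :
    Fil H (m + e) (δ a) ∧ coef H (δ a) (m + e) = phi H δ e m * coef H a m := by
  refine sum_lead H (fun a r => Fil H (m + e) (δ a) ∧ coef H (δ a) (m + e) = r) m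
    ?_ ?_ (phi H δ e m) ?_ ?_ a ha
  · simp [Fil.zero]
  · rintro a b r s ⟨h1, h2⟩ ⟨h3, h4⟩
    rw [map_add, map_add, Pi.add_apply, h2, h4]
    exact ⟨h1.add h3, rfl⟩
  · intro n c hn hlt
    have hlt' : wt (n + e) < wt (m + e) := by rw [map_add, map_add]; gcongr
    rw [map_smul, map_smul, Pi.smul_apply, hM n hn _ hlt', smul_zero]
    exact ⟨((hM n hn).smul c).of_lt hlt', rfl⟩
  · intro c hm
    rw [map_smul, map_smul, Pi.smul_apply, smul_eq_mul, mul_comm]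
    exact ⟨(hM m hm).smul c, rfl⟩

/-- The Leibniz rule for the leading part. -/
lemma phi_add (hL : ∀ a b, δ (a * b) = δ a * b + a * δ b)
    (hM : ∀ m, 0 ≤ m → Fil H (m + e) (δ (monoZ p q lam mu m)))
    {m n : Expo} (hm : 0 ≤ m) (hn : 0 ≤ n) :
    phi H δ e (m + n) = phi H δ e m * chi p q lam mu e n + phi H δ e n * chi p q lam mu m e := by
  have fm := Fil.monoZ H hm
  have fn := Fil.monoZ H hn
  have cm : coef H (monoZ p q lam mu m) m = 1 := by rw [coef_monoZ H hm, Pi.single_eq_same]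
  have cn : coef H (monoZ p q lam mu n) n = 1 := by rw [coef_monoZ H hn, Pi.single_eq_same]
  have h1 := (lead_delta hM (fm.mul fn)).2
  have h2 := coef_mul_lead (hM m hm) fn
  have h3 := coef_mul_lead fm (hM n hn)
  rw [coef_mul_lead fm fn, hL, map_add, Pi.add_apply, add_right_comm, h2, ← add_right_comm,
    add_assoc, h3, cm, cn, chi_add_left H, chi_add_right H] at h1
  have h0 := chi_ne_zero H m n
  apply mul_right_cancel₀ h0
  simp only [phi]
  simp only [phi] at h1
  linear_combination -h1

lemma coef_iterate (hM : ∀ m, 0 ≤ m → Fil H (m + e) (δ (monoZ p q lam mu m)))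
    {m : Expo} (hm : 0 ≤ m) (k : ℕ) :
    Fil H (m + k • e) ((δ ^ k) (monoZ p q lam mu m)) ∧
    coef H ((δ ^ k) (monoZ p q lam mu m)) (m + k • e)
      = ∏ i ∈ Finset.range k, phi H δ e (m + i • e) := by
  induction k with
  | zero => simpa [coef_monoZ H hm] using Fil.monoZ H hm
  | succ k ih =>
    obtain ⟨h1, h2⟩ := lead_delta hM ih.1
    rw [pow_succ', Module.End.mul_apply, succ_nsmul, ← add_assoc]
    refine ⟨h1, ?_⟩
    rw [h2, ih.2, Finset.prod_range_succ, mul_comm]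

lemma exists_phi_eq_zero (hM : ∀ m, 0 ≤ m → Fil H (m + e) (δ (monoZ p q lam mu m)))
    (hN : ∀ a, ∃ n : ℕ, 1 ≤ n ∧ (δ ^ n) a = 0) {m : Expo} (hm : 0 ≤ m) :
    ∃ k : ℕ, phi H δ e (m + k • e) = 0 := by
  obtain ⟨n, -, hn⟩ := hN (monoZ p q lam mu m)
  have h := (coef_iterate hM hm n).2
  rw [hn, map_zero, Pi.zero_apply, eq_comm, Finset.prod_eq_zero_iff] at h
  obtain ⟨k, -, hk⟩ := h
  exact ⟨k, hk⟩

/-- If the degree `e` of the leading part is itself an exponent vector, then the leading part cannot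
be locally nilpotent unless it vanishes. -/
lemma phi_eq_zero_of_nonneg [CharZero K] (hL : ∀ a b, δ (a * b) = δ a * b + a * δ b)
    (hM : ∀ m, 0 ≤ m → Fil H (m + e) (δ (monoZ p q lam mu m)))
    (hN : ∀ a, ∃ n : ℕ, 1 ≤ n ∧ (δ ^ n) a = 0) (he : 0 ≤ e) {m : Expo} (hm : 0 ≤ m) :
    phi H δ e m = 0 := by
  have hk : ∀ k : ℕ, 0 ≤ k • e := fun k => nsmul_nonneg he k
  have hee : phi H δ e e = 0 := by
    have hchi : ∀ k : ℕ, chi p q lam mu (e + k • e) e = chi p q lam mu e e ^ (k + 1) := by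
      intro k
      induction k with
      | zero => simp
      | succ k ih => rw [succ_nsmul, ← add_assoc, chi_add_left H, ih, pow_succ _ (k + 1)]
    have h : ∀ k : ℕ, phi H δ e (e + k • e) = (k + 1) * chi p q lam mu e e ^ k * phi H δ e e := by
      intro k
      induction k with
      | zero => simp
      | succ k ih =>
        rw [succ_nsmul, ← add_assoc, phi_add hL hM (add_nonneg he (hk k)) he, ih, hchi]
        push_cast
        ring
    obtain ⟨k, hk0⟩ := exists_phi_eq_zero hM hN he
    rw [h] at hk0
    have h1 : ((k : K) + 1) * chi p q lam mu e e ^ k ≠ 0 :=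
      mul_ne_zero (Nat.cast_add_one_ne_zero k) (pow_ne_zero _ (chi_ne_zero H e e))
    exact (mul_eq_zero.1 hk0).resolve_left h1
  have h : ∀ k : ℕ, phi H δ e (m + k • e) = chi p q lam mu e e ^ k * phi H δ e m := by
    intro k
    induction k with
    | zero => simp
    | succ k ih =>
      rw [succ_nsmul, ← add_assoc, phi_add hL hM (add_nonneg hm (hk k)) he, ih, hee]
      ring
  obtain ⟨k, hk0⟩ := exists_phi_eq_zero hM hN hm
  rw [h] at hk0
  exact (mul_eq_zero.1 hk0).resolve_left (pow_ne_zero _ (chi_ne_zero H e e))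

/-- A consequence of computing `phi (g + h)` and `phi (h + g)`. -/
lemma chi_comm (hL : ∀ a b, δ (a * b) = δ a * b + a * δ b)
    (hM : ∀ m, 0 ≤ m → Fil H (m + e) (δ (monoZ p q lam mu m))) {g h : Expo}
    (hg : 0 ≤ g) (hh : 0 ≤ h) (h1 : phi H δ e g ≠ 0) (h2 : phi H δ e h = 0) :
    chi p q lam mu e h = chi p q lam mu h e := by
  have h3 := phi_add hL hM hg hh
  rw [add_comm, phi_add hL hM hh hg, h2] at h3
  apply mul_left_cancel₀ h1
  linear_combination -h3

lemma nonneg_of_phi_ne_zero {m : Expo} (h : phi H δ e m ≠ 0) : 0 ≤ m + e := by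
  by_contra hc
  exact h (coef_eq_zero H _ hc)

end Derivation

/-! ### Existence of the leading part and the contradiction -/

lemma delta_eq_zero_of_gens {δ : Module.End K (ExtWeyl K p q lam mu)}
    (hL : ∀ a b, δ (a * b) = δ a * b + a * δ b)
    (hX : δ (genX p q lam mu) = 0) (hY : δ (genY p q lam mu) = 0)
    (hS : δ (genS p q lam mu) = 0) (hT : δ (genT p q lam mu) = 0) : δ = 0 := by
  have h1 : δ 1 = 0 := by simpa using hL 1 1
  refine LinearMap.ext fun a => ?_
  obtain ⟨f, rfl⟩ := RingQuot.mkAlgHom_surjective K (ExtWeylRel K p q lam mu) a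
  induction f using FreeAlgebra.induction with
  | grade0 r =>
    rw [AlgHom.commutes, Algebra.algebraMap_eq_smul_one, map_smul, h1, smul_zero,
      LinearMap.zero_apply]
  | grade1 i =>
    fin_cases i
    · exact hX
    · exact hY
    · exact hS
    · exact hT
  | mul f g hf hg =>
    rw [LinearMap.zero_apply] at hf hg ⊢
    rw [map_mul, hL, hf, hg, zero_mul, mul_zero, add_zero]
  | add f g hf hg =>
    rw [LinearMap.zero_apply] at hf hg ⊢
    rw [map_add, map_add, hf, hg, add_zero]

variable (p q lam mu) in
/-- The generators, listed as `y, x, s, t` in accordance with `Expo`. -/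
def gen : Fin 4 → ExtWeyl K p q lam mu :=
  ![genY p q lam mu, genX p q lam mu, genS p q lam mu, genT p q lam mu]

/-- The exponents of the generators `gen`. -/
def genExpo : Fin 4 → Expo := ![gy, gx, gs, gt]

lemma genExpo_nonneg (i : Fin 4) : 0 ≤ genExpo i := by
  fin_cases i <;> simp [genExpo, gx, gy, gs, gt, Prod.le_def]

lemma monoZ_genExpo (i : Fin 4) : monoZ p q lam mu (genExpo i) = gen p q lam mu i := by
  fin_cases i <;> simp [genExpo, gen, gx, gy, gs, gt, monoZ, mono]

/-- A nonzero derivation has a leading part, of degree `e` the largest difference between an exponent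
of `δ g` and that of `g`, over the four generators `g`. -/
lemma exists_lead (H : Params p q lam mu) {δ : Module.End K (ExtWeyl K p q lam mu)}
    (hL : ∀ a b, δ (a * b) = δ a * b + a * δ b) (h0 : δ ≠ 0) :
    ∃ e : Expo, (∀ i, Fil H (genExpo i + e) (δ (gen p q lam mu i))) ∧
      ∃ i, phi H δ e (genExpo i) ≠ 0 := by
  classical
  choose S _ hS _ using fun i => expansion H (δ (gen p q lam mu i))
  let E : Finset Expo := Finset.univ.biUnion fun i =>
    ((S i).filter fun m => coef H (δ (gen p q lam mu i)) m ≠ 0).image fun m => m - genExpo i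
  have hE : ∀ e, e ∈ E ↔ ∃ i, coef H (δ (gen p q lam mu i)) (genExpo i + e) ≠ 0 := by
    intro e
    simp only [E, Finset.mem_biUnion, Finset.mem_univ, true_and, Finset.mem_image,
      Finset.mem_filter]
    refine exists_congr fun i => ⟨?_, fun h => ?_⟩
    · rintro ⟨m, ⟨-, hm⟩, rfl⟩
      rwa [add_sub_cancel]
    · exact ⟨_, ⟨by_contra fun hc => h (hS i _ hc), h⟩, add_sub_cancel_left _ _⟩
  have hne : E.Nonempty := by
    by_contra hc
    rw [Finset.not_nonempty_iff_eq_empty] at hc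
    have hz : ∀ i, δ (gen p q lam mu i) = 0 := by
      intro i
      refine coef_injective H fun m => by_contra fun hm => ?_
      have : m - genExpo i ∈ E := (hE _).2 ⟨i, by rwa [add_sub_cancel]⟩
      simp [hc] at this
    exact h0 (delta_eq_zero_of_gens hL (hz 1) (hz 0) (hz 2) (hz 3))
  obtain ⟨e, he, hmax⟩ := E.exists_max_image wt hne
  refine ⟨e, fun i m hm => ?_, ?_⟩
  · by_contra hc
    have h1 : m - genExpo i ∈ E := (hE _).2 ⟨i, by rwa [add_sub_cancel]⟩
    have h2 := hmax _ h1
    rw [map_add] at hm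
    rw [map_sub, sub_le_iff_le_add'] at h2
    exact absurd hm h2.not_gt
  · obtain ⟨i, hi⟩ := (hE e).1 he
    exact ⟨i, by rwa [phi, monoZ_genExpo]⟩

lemma zpow_ne_one_of {r : K} (hr : ∀ n : ℕ, 0 < n → r ^ n ≠ 1) {n : ℤ} (hn : 0 < n) :
    r ^ n ≠ 1 := by
  lift n to ℕ using hn.le
  rw [zpow_natCast]
  exact hr n (by exact_mod_cast hn)

/-- If `lam ^ n` and `mu ^ n` are powers of `q` whose exponents cancel in
`(lam ^ k * mu ^ l) ^ n`, then `p ^ n = 1`; this excludes leading parts that move only `x` or only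
`y`. -/
lemma lam_mu_absurd (H : Params p q lam mu) (hpru : ∀ n : ℕ, 0 < n → p ^ n ≠ 1)
    {n k l u v : ℤ} (hn : 0 < n) (h1 : lam ^ k * mu ^ l = p⁻¹) (h2 : lam ^ n = q ^ u)
    (h3 : mu ^ n = q ^ v) (huv : u * k + v * l = 0) : False := by
  refine zpow_ne_one_of hpru hn ?_
  have h4 : (lam ^ k * mu ^ l) ^ n = 1 := by
    rw [mul_zpow, ← zpow_mul, ← zpow_mul, mul_comm k, mul_comm l, zpow_mul, zpow_mul, h2, h3,
      ← zpow_mul, ← zpow_mul, ← zpow_add₀ H.hq, huv, zpow_zero]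
  rw [h1, inv_zpow] at h4
  exact inv_eq_one.1 h4

/-- An exponent `e` with a negative coordinate, which becomes nonnegative after adding the exponent
of the generator `i`, cannot satisfy the commutation relations with all other generators. -/
lemma chi_absurd (H : Params p q lam mu) (hpru : ∀ n : ℕ, 0 < n → p ^ n ≠ 1)
    (hqru : ∀ n : ℕ, 0 < n → q ^ n ≠ 1) {e : Expo} (he : ¬ 0 ≤ e) (i : Fin 4)
    (hi : 0 ≤ genExpo i + e)
    (hc : ∀ j, j ≠ i → chi p q lam mu e (genExpo j) = chi p q lam mu (genExpo j) e) : False := by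
  obtain ⟨a, b, k, l⟩ := e
  have hY := hc 0
  have hX := hc 1
  have hS := hc 2
  have hT := hc 3
  have hp := H.hp
  have hq := H.hq
  simp only [genExpo, gx, gy, gs, gt, chi, Matrix.cons_val] at hX hY hS hT
  simp at hX hY hS hT
  have he' : ¬ (0 ≤ a ∧ 0 ≤ b ∧ 0 ≤ k ∧ 0 ≤ l) := he
  have hab : lam ^ k * mu ^ l = p ^ a → p ^ b * (lam ^ k)⁻¹ * (mu ^ l)⁻¹ = 1 → a = b := by
    intro h1 h2
    rw [mul_assoc, ← mul_inv, h1, ← zpow_neg, ← zpow_add₀ hp] at h2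
    by_contra hne
    rcases lt_or_gt_of_ne hne with h | h
    · exact zpow_ne_one_of hpru (n := b + -a) (by omega) h2
    · refine zpow_ne_one_of hpru (n := -(b + -a)) (by omega) ?_
      rw [zpow_neg, h2, inv_one]
  have hT0 : 1 = mu ^ (b - a) * (q ^ k)⁻¹ → mu ^ (b - a) = q ^ k := fun h =>
    (eq_of_div_eq_one ((div_eq_mul_inv _ _).trans h.symm))
  fin_cases i <;> simp [genExpo, gx, gy, gs, gt, Prod.le_def] at hi hX hY hS hT
  · obtain rfl : a = -1 := by omega
    refine lam_mu_absurd H hpru (n := b - -1) (k := k) (l := l) (u := -l) (v := k) (by omega)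
      (by rw [hX, zpow_neg_one]) (by rw [← hS, zpow_neg]) (hT0 hT) (by ring)
  · obtain rfl : b = -1 := by omega
    refine lam_mu_absurd H hpru (n := -(-1 - a)) (k := k) (l := l) (u := l) (v := -k) (by omega)
      ?_ (by rw [zpow_neg, ← hS, inv_inv]) (by rw [zpow_neg, hT0 hT, zpow_neg]) (by ring)
    rw [mul_assoc, ← mul_inv, zpow_neg_one] at hY
    exact (eq_of_div_eq_one ((div_eq_mul_inv _ _).trans hY)).symm
  · obtain rfl : k = -1 := by omega
    have h := hT0 hT
    rw [hab hX hY, sub_self, zpow_zero, zpow_neg_one] at h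
    exact hqru 1 one_pos (by rw [pow_one]; exact inv_eq_one.1 h.symm)
  · obtain rfl : l = -1 := by omega
    rw [hab hX hY, sub_self, zpow_zero, zpow_neg_one, inv_inv] at hS
    exact hqru 1 one_pos (by rw [pow_one]; exact hS)

lemma nonneg_of_two {e : Expo} {i j : Fin 4} (hij : j ≠ i) (hi : 0 ≤ genExpo i + e)
    (hj : 0 ≤ genExpo j + e) : 0 ≤ e := by
  obtain ⟨a, b, k, l⟩ := e
  change 0 ≤ a ∧ 0 ≤ b ∧ 0 ≤ k ∧ 0 ≤ l
  fin_cases i <;> fin_cases j <;>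
    simp [genExpo, gx, gy, gs, gt, Prod.le_def] at hi hj hij ⊢ <;> omega

end ExtWeylAux

open ExtWeylAux in
/-- Assume neither `p` nor `q` is a root of unity and that `K` has
characteristic zero. Then every locally nilpotent `K`-linear derivation of
`A_p(λ, μ, K_q[s,t])` is zero. Here a derivation is a `K`-linear endomorphism `δ` with
`δ(ab) = δ(a)b + aδ(b)`, and it is locally nilpotent if every element is killed by some
power `δ^n` (`n ≥ 1`). -/
theorem extWeyl_locally_nilpotent_derivation_eq_zero
    (K : Type*) [Field K] [CharZero K] (p q lam mu : K)
    (hp : p ≠ 0) (hq : q ≠ 0) (hlam : lam ≠ 0) (hmu : mu ≠ 0)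
    (hpru : ∀ n : ℕ, 0 < n → p ^ n ≠ 1) (hqru : ∀ n : ℕ, 0 < n → q ^ n ≠ 1)
    (δ : Module.End K (ExtWeyl K p q lam mu))
    (hLeibniz : ∀ a b : ExtWeyl K p q lam mu, δ (a * b) = δ a * b + a * δ b)
    (hLocNilp : ∀ a : ExtWeyl K p q lam mu, ∃ n : ℕ, 1 ≤ n ∧ (δ ^ n) a = 0) :
    δ = 0 := by
  have H : Params p q lam mu := ⟨hp, fun h => hpru 1 one_pos (by rw [h, one_pow]), hq, hlam, hmu⟩
  by_contra h0
  obtain ⟨e, hF, i, hi⟩ := exists_lead H hLeibniz h0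
  have hM : ∀ m, 0 ≤ m → Fil H (m + e) (δ (monoZ p q lam mu m)) := fun m hm =>
    nice_monoZ hLeibniz (hF 1) (hF 0) (hF 2) (hF 3) hm
  have he : ¬ 0 ≤ e := fun he =>
    hi (phi_eq_zero_of_nonneg hLeibniz hM hLocNilp he (genExpo_nonneg i))
  refine chi_absurd H hpru hqru he i (nonneg_of_phi_ne_zero hi) fun j hj => ?_
  refine chi_comm hLeibniz hM (genExpo_nonneg i) (genExpo_nonneg j) hi ?_
  by_contra hj0
  exact he (nonneg_of_two hj (nonneg_of_phi_ne_zero hi) (nonneg_of_phi_ne_zero hj0))
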